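/- For z in the unit ball B^N and x ∈ SU(N,1) with x^{-1} having block form [a b; c^T d] (a ∈ M_N(ℂ), b,c ∈ ℂ^N, d ∈ ℂ), the operator π_ξ(x)f(z) = (−⟨z,b⟩ + conj(d))^{−(N+ξ+1)} f((a*z − conj(c))/(−⟨z,b⟩ + conj(d))) is unitary on A^2_ξ(B^N) for integer ξ > -1: ‖π_ξ(x)f‖_ξ = ‖f‖_ξ for all f ∈ A^2_ξ(B^N). -/

import Mathlib

/-!
Since `x` preserves the form `J`, one has `x⁻¹ = J xᴴ J`, and the point at which `f` is evaluated
is the image `x · z` of `z` under the Möbius action of `x` itself, with denominator `D(z)`, the last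
coordinate of `x (z, 1)`. Invariance of the Hermitian form at `(z, 1)` gives
`1 - |x · z|² = (1 - |z|²) / |D(z)|²` (`one_sub_mob`), so `D` has no zero in the ball and the ball is
mapped bijectively to itself, with inverse the action of `x⁻¹` (`mob_inv`). The complex Jacobian
determinant is `D(z)^{-(N+1)}` because `det x = 1` (`det_jac`), so the real one is
`|D(z)|^{-2(N+1)}`. Changing variables (`integral_mob`) in `∫ |f|² (1 - |z|²)^ξ` produces the factor
`|D|^{-2(N+1)} |D|^{-2ξ}`, which is the square of the modulus of the multiplier `D^{-(N+ξ+1)}`.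
-/

open scoped BigOperators
open Matrix MeasureTheory

/-- The open unit ball in `ℂ^N`. -/
def unitBall (N : ℕ) : Set (Fin N → ℂ) := {z | ∑ i, ‖z i‖ ^ 2 < 1}

/-- The signature matrix `J = diag(I_N, -1)`. -/
def Jmat (N : ℕ) : Matrix (Fin (N + 1)) (Fin (N + 1)) ℂ :=
  Matrix.diagonal (fun i => if i = Fin.last N then -1 else 1)

/-- The homogeneous coordinates `(z, 1)` of the point `z` of `ℂ^N`. -/
def lift1 {N : ℕ} (z : Fin N → ℂ) : Fin (N + 1) → ℂ := Fin.snoc z 1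

/-- The denominator of the Möbius action of `x` at `z`: the last coordinate of `x (z, 1)`. -/
def den {N : ℕ} (x : Matrix (Fin (N + 1)) (Fin (N + 1)) ℂ) (z : Fin N → ℂ) : ℂ :=
  ∑ j, x (Fin.last N) j.castSucc * z j + x (Fin.last N) (Fin.last N)

/-- The Möbius action of `x` on `ℂ^N`; a junk value where `den x z = 0`, which does not happen on
the ball when `x` preserves `J`. -/
noncomputable def mob {N : ℕ} (x : Matrix (Fin (N + 1)) (Fin (N + 1)) ℂ) (z : Fin N → ℂ) : Fin N → ℂ :=
  fun i => (∑ j, x i.castSucc j.castSucc * z j + x i.castSucc (Fin.last N)) / den x z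

section Mobius

variable {N : ℕ} {x y : Matrix (Fin (N + 1)) (Fin (N + 1)) ℂ} {z : Fin N → ℂ}

lemma mulVec_lift1 (h : den x z ≠ 0) : x *ᵥ lift1 z = den x z • lift1 (mob x z) := by
  ext i
  refine Fin.lastCases ?_ (fun i => ?_) i
  · simp [lift1, mulVec, dotProduct, Fin.sum_univ_castSucc, den]
  · simp [lift1, mulVec, dotProduct, Fin.sum_univ_castSucc, mob]
    field_simp

/-- `x` is an isometry of the Hermitian form with matrix `J`. -/
lemma herm_mulVec (hx : xᴴ * Jmat N * x = Jmat N) (v : Fin (N + 1) → ℂ) :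
    star (x *ᵥ v) ⬝ᵥ (Jmat N *ᵥ (x *ᵥ v)) = star v ⬝ᵥ (Jmat N *ᵥ v) := by
  rw [star_mulVec, ← dotProduct_mulVec, mulVec_mulVec, mulVec_mulVec, hx]

lemma herm_lift1 (z : Fin N → ℂ) :
    star (lift1 z) ⬝ᵥ (Jmat N *ᵥ lift1 z) = ((∑ i, ‖z i‖ ^ 2 - 1 : ℝ) : ℂ) := by
  simp [lift1, Jmat, mulVec_diagonal, dotProduct, Fin.sum_univ_castSucc,
    ← Complex.normSq_eq_conj_mul_self, Complex.normSq_eq_norm_sq, Fin.castSucc_ne_last]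
  ring

/-- Invariance of the Hermitian form, evaluated at `(z, 1)`. -/
lemma norm_den (hx : xᴴ * Jmat N * x = Jmat N) (z : Fin N → ℂ) :
    ‖den x z‖ ^ 2 - ∑ i : Fin N, ‖(x *ᵥ lift1 z) i.castSucc‖ ^ 2 = 1 - ∑ i, ‖z i‖ ^ 2 := by
  have h := (herm_mulVec hx (lift1 z)).trans (herm_lift1 z)
  have hd : den x z = (x *ᵥ lift1 z) (Fin.last N) := by
    simp [lift1, mulVec, dotProduct, Fin.sum_univ_castSucc, den]
  rw [hd]
  generalize x *ᵥ lift1 z = w at *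
  simp [Jmat, mulVec_diagonal, dotProduct, Fin.sum_univ_castSucc,
    ← Complex.normSq_eq_conj_mul_self, Complex.normSq_eq_norm_sq, Fin.castSucc_ne_last] at h
  norm_cast at h
  have : (∑ i : Fin N, ‖w i.castSucc‖ ^ 2 + -‖w (Fin.last N)‖ ^ 2 : ℝ) = ∑ i, ‖z i‖ ^ 2 - 1 := by
    exact_mod_cast h
  linarith

lemma den_ne (hx : xᴴ * Jmat N * x = Jmat N) (hz : z ∈ unitBall N) : den x z ≠ 0 := by
  intro h
  have := norm_den hx z
  have h2 : (0 : ℝ) ≤ ∑ i : Fin N, ‖(x *ᵥ lift1 z) i.castSucc‖ ^ 2 := by positivity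
  have h3 : ∑ i, ‖z i‖ ^ 2 < 1 := hz
  rw [h, norm_zero] at this
  linarith

/-- The transformation law of the defining function `1 - |z|²` of the ball. -/
lemma one_sub_mob (hx : xᴴ * Jmat N * x = Jmat N) (hz : z ∈ unitBall N) :
    1 - ∑ i, ‖mob x z i‖ ^ 2 = (1 - ∑ i, ‖z i‖ ^ 2) / ‖den x z‖ ^ 2 := by
  have hd := den_ne hx hz
  have := norm_den hx z
  rw [mulVec_lift1 hd] at this
  simp [lift1, mul_pow, ← Finset.mul_sum] at this
  have hd' : ‖den x z‖ ^ 2 ≠ 0 := by positivity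
  field_simp
  linarith

lemma mob_mem (hx : xᴴ * Jmat N * x = Jmat N) (hz : z ∈ unitBall N) : mob x z ∈ unitBall N := by
  have h := one_sub_mob hx hz
  have hd := den_ne hx hz
  have h3 : ∑ i, ‖z i‖ ^ 2 < 1 := hz
  have : 0 < (1 - ∑ i, ‖z i‖ ^ 2) / ‖den x z‖ ^ 2 := div_pos (by linarith) (by positivity)
  change ∑ i, ‖mob x z i‖ ^ 2 < 1
  linarith

lemma mob_inv (hx : xᴴ * Jmat N * x = Jmat N) (hy : yᴴ * Jmat N * y = Jmat N) (hyx : y * x = 1)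
    (hz : z ∈ unitBall N) : mob y (mob x z) = z := by
  have hd := den_ne hx hz
  have hd2 := den_ne hy (mob_mem hx hz)
  have h : y *ᵥ (x *ᵥ lift1 z) = lift1 z := by rw [mulVec_mulVec, hyx, one_mulVec]
  rw [mulVec_lift1 hd, mulVec_smul, mulVec_lift1 hd2, smul_smul] at h
  have h1 := congrFun h (Fin.last N)
  simp [lift1] at h1
  ext i
  have h2 := congrFun h i.castSucc
  simpa [lift1, h1] using h2

/-- The complex Jacobian matrix of `mob x` at `z`, written as `D⁻¹ (A - w cᵀ)` where
`w = mob x z`, `D = den x z`, `A` is the upper left block of `x` and `(cᵀ, *)` its last row. -/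
noncomputable def jac (x : Matrix (Fin (N + 1)) (Fin (N + 1)) ℂ) (z : Fin N → ℂ) : Matrix (Fin N) (Fin N) ℂ :=
  (den x z)⁻¹ • Matrix.of fun i j =>
    x i.castSucc j.castSucc - mob x z i * x (Fin.last N) j.castSucc

/-- With `A, c, D, w` as in `jac`, the block factorization
`x [1 z; 0 1] = [A w; cᵀ 1] [1 0; 0 D]` gives `1 = det (A - w cᵀ) * D`. -/
lemma det_jac (hdet : x.det = 1) (hd : den x z ≠ 0) : (jac x z).det = ((den x z) ^ (N + 1))⁻¹ := by
  let u : Matrix (Fin N ⊕ Fin 1) (Fin N ⊕ Fin 1) ℂ :=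
    fromBlocks 1 (Matrix.of fun i _ => z i) 0 1
  let X := x.submatrix (finSumFinEquiv : Fin N ⊕ Fin 1 ≃ _) finSumFinEquiv
  have hX : X.det = 1 := by rw [det_submatrix_equiv_self, hdet]
  have hu : u.det = 1 := by simp [u]
  have hc : ∀ i : Fin N, Fin.castAdd 1 i = i.castSucc := fun _ => rfl
  have hl : Fin.natAdd N (0 : Fin 1) = Fin.last N := rfl
  have hXu : X * u = fromBlocks (Matrix.of fun i j => x i.castSucc j.castSucc)
      (Matrix.of fun i _ => mob x z i) (Matrix.of fun _ j => x (Fin.last N) j.castSucc) 1 *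
      fromBlocks 1 0 0 (Matrix.of fun _ _ => den x z) := by
    have hm : ∀ i, mob x z i * den x z =
        ∑ j, x i.castSucc j.castSucc * z j + x i.castSucc (Fin.last N) := fun i =>
      div_mul_cancel₀ _ hd
    ext i j
    rcases i with i | i <;> rcases j with j | j <;>
      simp [X, u, mul_apply, Matrix.one_apply, hc, hl, hm, Subsingleton.elim _ (0 : Fin 1)]
    simp [den]
  have h := congrArg Matrix.det hXu
  rw [det_mul, det_mul, hX, hu, det_fromBlocks_one₂₂, det_fromBlocks_zero₂₁] at h
  simp only [det_one, one_mul, det_unique, of_apply] at h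
  rw [jac, det_smul, Fintype.card_fin, pow_succ, mul_inv, inv_pow]
  congr 1
  refine eq_inv_of_mul_eq_one_left (Eq.trans ?_ h.symm)
  congr 2
  ext i j
  simp [mul_apply]

lemma hasFDerivAt_mob (hd : den x z ≠ 0) :
    HasFDerivAt (mob x) (Matrix.toLin' (jac x z)).toContinuousLinearMap z := by
  -- every row of `x` gives an affine function of `z`
  have hrow : ∀ k, HasFDerivAt (fun z : Fin N → ℂ => ∑ j, x k j.castSucc * z j + x k (Fin.last N))
      (∑ j, x k j.castSucc • (ContinuousLinearMap.proj j : (Fin N → ℂ) →L[ℂ] ℂ)) z := fun k =>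
    (HasFDerivAt.fun_sum fun j _ => (hasFDerivAt_apply j z).const_mul _).add_const _
  rw [hasFDerivAt_pi']
  intro i
  have h := (hrow i.castSucc).mul ((hasDerivAt_inv hd).comp_hasFDerivAt z (hrow (Fin.last N)))
  refine h.congr_fderiv ?_
  ext v
  change _ = (jac x z *ᵥ v) i
  have h2 : ∑ j, x i.castSucc j.castSucc * z j + x i.castSucc (Fin.last N) =
      mob x z i * den x z := (div_mul_cancel₀ _ hd).symm
  simp only [h2]
  simp [jac, mulVec, dotProduct, sub_mul, Finset.sum_sub_distrib, mul_assoc, ← Finset.mul_sum]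
  field_simp
  ring

/-- The real determinant of a complex linear map is the squared modulus of the complex one. -/
lemma det_real (M : Matrix (Fin N) (Fin N) ℂ) :
    ((Matrix.toLin' M).toContinuousLinearMap.restrictScalars ℝ).det = ‖M.det‖ ^ 2 := by
  change LinearMap.det ((Matrix.toLin' M).restrictScalars ℝ) = _
  rw [LinearMap.det_restrictScalars, LinearMap.det_toLin', Algebra.norm_complex_apply,
    Complex.normSq_eq_norm_sq]

lemma inv_eq (hx : xᴴ * Jmat N * x = Jmat N) : x⁻¹ = Jmat N * xᴴ * Jmat N := by
  refine inv_eq_left_inv ?_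
  rw [Matrix.mul_assoc (Jmat N), Matrix.mul_assoc, hx, Jmat, diagonal_mul_diagonal]
  rw [← diagonal_one]
  congr 1
  ext i
  split_ifs <;> simp

lemma inv_mem (hdet : x.det = 1) (hx : xᴴ * Jmat N * x = Jmat N) :
    (x⁻¹)ᴴ * Jmat N * x⁻¹ = Jmat N := by
  have h : x * x⁻¹ = 1 := mul_nonsing_inv x (by simp [hdet])
  calc (x⁻¹)ᴴ * Jmat N * x⁻¹ = (x⁻¹)ᴴ * (xᴴ * Jmat N * x) * x⁻¹ := by rw [hx]
    _ = (x * x⁻¹)ᴴ * Jmat N * (x * x⁻¹) := by simp only [conjTranspose_mul, Matrix.mul_assoc]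
    _ = Jmat N := by simp [h]

lemma measurableSet_unitBall : MeasurableSet (unitBall N) :=
  (isOpen_lt (by fun_prop) continuous_const).measurableSet

/-- The change of variables formula for the automorphism `mob x` of the ball. -/
lemma integral_mob (hdet : x.det = 1) (hx : xᴴ * Jmat N * x = Jmat N) (g : (Fin N → ℂ) → ℝ) :
    ∫ z in unitBall N, (‖den x z‖ ^ (2 * (N + 1)))⁻¹ * g (mob x z) = ∫ z in unitBall N, g z := by
  have hu : IsUnit x.det := by simp [hdet]
  have hy := inv_mem hdet hx
  have hleft : Set.LeftInvOn (mob x⁻¹) (mob x) (unitBall N) := fun z hz =>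
    mob_inv hx hy (nonsing_inv_mul x hu) hz
  have himg : mob x '' unitBall N = unitBall N := by
    refine Set.Subset.antisymm (Set.image_subset_iff.2 fun z hz => mob_mem hx hz) fun w hw => ?_
    exact ⟨mob x⁻¹ w, mob_mem hy hw, mob_inv hy hx (mul_nonsing_inv x hu) hw⟩
  have h := integral_image_eq_integral_abs_det_fderiv_smul volume measurableSet_unitBall
    (fun z hz => ((hasFDerivAt_mob (den_ne hx hz)).restrictScalars ℝ).hasFDerivWithinAt)
    hleft.injOn g
  rw [himg] at h
  rw [h]
  refine setIntegral_congr_fun measurableSet_unitBall fun z hz => ?_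
  simp only [det_real, det_jac hdet (den_ne hx hz), smul_eq_mul]
  rw [abs_of_nonneg (by positivity), norm_inv, norm_pow, inv_pow, ← pow_mul, mul_comm (N + 1)]

end Mobius

/-- Unitarity of the discrete series operator `π_ξ(x)` on `A²_ξ(B^N)`:
for `x ∈ SU(N,1)` with `x⁻¹ = [a b; cᵀ d]`, the operator
`π_ξ(x)f(z) = (-⟨z,b⟩ + conj d)^{-(N+ξ+1)} f((a*z - conj c)/(-⟨z,b⟩ + conj d))`
preserves the weighted Bergman norm: `‖π_ξ(x)f‖_ξ = ‖f‖_ξ`. -/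
theorem discrete_series_unitary (N : ℕ) (hN : 0 < N) (ξ : ℕ)
    (x : Matrix (Fin (N + 1)) (Fin (N + 1)) ℂ)
    (hdet : x.det = 1) (hx : xᴴ * Jmat N * x = Jmat N)
    (f : (Fin N → ℂ) → ℂ) (hf : DifferentiableOn ℂ f (unitBall N))
    (hfL2 : IntegrableOn (fun z => ‖f z‖ ^ 2 * (1 - ∑ i, ‖z i‖ ^ 2) ^ ξ) (unitBall N)) :
    -- blocks of x⁻¹
    (fun (y : Matrix (Fin (N + 1)) (Fin (N + 1)) ℂ) =>
      (fun (a : Fin N → Fin N → ℂ) (b : Fin N → ℂ) (c : Fin N → ℂ) (d : ℂ) =>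
        ∫ z in unitBall N,
          ‖(((-(∑ i, z i * (starRingEnd ℂ) (b i)) + (starRingEnd ℂ) d) ^ (N + ξ + 1))⁻¹ *
              f (fun i =>
                (∑ j, (starRingEnd ℂ) (a j i) * z j - (starRingEnd ℂ) (c i)) /
                  (-(∑ i, z i * (starRingEnd ℂ) (b i)) + (starRingEnd ℂ) d)))‖ ^ 2 *
            (1 - ∑ i, ‖z i‖ ^ 2) ^ ξ)
        (fun i j => y i.castSucc j.castSucc)
        (fun i => y i.castSucc (Fin.last N))
        (fun j => y (Fin.last N) j.castSucc)
        (y (Fin.last N) (Fin.last N))) x⁻¹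
    = ∫ z in unitBall N, ‖f z‖ ^ 2 * (1 - ∑ i, ‖z i‖ ^ 2) ^ ξ := by
  have hJ : Jmat N = Matrix.diagonal (fun i => if i = Fin.last N then -1 else 1) := rfl
  rw [← integral_mob hdet hx fun z => ‖f z‖ ^ 2 * (1 - ∑ i, ‖z i‖ ^ 2) ^ ξ]
  refine setIntegral_congr_fun measurableSet_unitBall fun z hz => ?_
  -- `x⁻¹ = J xᴴ J`, so the conjugated blocks of `x⁻¹` in the operator are, up to the signs it
  -- carries, the entries of `x`.
  have hden : -(∑ i, z i * (starRingEnd ℂ) (x⁻¹ (Fin.castSucc i) (Fin.last N))) +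
      (starRingEnd ℂ) (x⁻¹ (Fin.last N) (Fin.last N)) = den x z := by
    simp [inv_eq hx, hJ, den, Fin.castSucc_ne_last, mul_comm]
  have hmob : (fun i : Fin N => (∑ j : Fin N, (starRingEnd ℂ) (x⁻¹ j.castSucc i.castSucc) * z j -
      (starRingEnd ℂ) (x⁻¹ (Fin.last N) i.castSucc)) / den x z) = mob x z := by
    ext i
    simp [inv_eq hx, hJ, mob, Fin.castSucc_ne_last]
  simp only [hden, hmob, one_sub_mob hx hz, norm_mul, norm_inv, norm_pow, div_pow]
  have hd : ‖den x z‖ ≠ 0 := norm_ne_zero_iff.2 (den_ne hx hz)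
  field_simp
  ring
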